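/- For n ∈ ℕ and p, k > 0, the function H(x) = x · |ₚβₖ⁽ⁿ⁾(x)| is strictly completely monotonic on (0, ∞): for every m ≥ 1 and x > 0, (−1)^m H^{(m)}(x) > 0. -/

import Mathlib

open MeasureTheory Real

noncomputable def pkBeta (p k x : ℝ) : ℝ :=
  (p / k) * ∫ t in Set.Ioi (0:ℝ), Real.exp (-(x * t) / k) / (1 + Real.exp (-t))

def PP (k : ℝ) (g : ℝ → ℝ) : Prop :=
  ∀ a : ℝ, 0 < a → IntegrableOn (fun t => g t * Real.exp (-(a * t) / k)) (Set.Ioi 0)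

noncomputable def LL (k : ℝ) (g : ℝ → ℝ) (x : ℝ) : ℝ :=
  ∫ t in Set.Ioi (0:ℝ), g t * Real.exp (-(x * t) / k)

lemma PP_const_mul {k : ℝ} {g : ℝ → ℝ} (c : ℝ) (h : PP k g) : PP k (fun t => c * g t) := by
  intro a ha
  have := (h a ha).const_mul c
  simpa [IntegrableOn, mul_assoc] using this

lemma PP_add {k : ℝ} {f g : ℝ → ℝ} (hf : PP k f) (h : PP k g) : PP k (fun t => f t + g t) := by
  intro a ha
  have := (hf a ha).add (h a ha)
  refine this.congr (Filter.Eventually.of_forall fun t => ?_)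
  simp [add_mul]

lemma PP_mul {k : ℝ} (hk : 0 < k) {g : ℝ → ℝ} (h : PP k g) : PP k (fun t => t * g t) := by
  intro a ha
  have h2 := h (a/2) (by positivity)
  have h3 : IntegrableOn (fun t => (t * Real.exp (-(a/2 * t) / k)) *
      (g t * Real.exp (-(a/2 * t) / k))) (Set.Ioi 0) := by
    refine Integrable.bdd_mul (c := 2 * k / a) h2 (by fun_prop) ?_
    refine (ae_restrict_iff' measurableSet_Ioi).2 (Filter.Eventually.of_forall fun t ht => ?_)
    have ht : 0 < t := ht
    rw [Real.norm_of_nonneg (by positivity), neg_div, Real.exp_neg, ← div_eq_mul_inv,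
      div_le_div_iff₀ (by positivity) ha]
    have h4 := Real.add_one_le_exp (a/2 * t / k)
    have h5 : a / 2 * t / k ≤ Real.exp (a/2 * t / k) := by linarith
    rw [div_le_iff₀ hk] at h5
    nlinarith
  refine h3.congr (Filter.Eventually.of_forall fun t => ?_)
  have : Real.exp (-(a * t) / k) = Real.exp (-(a/2 * t) / k) * Real.exp (-(a/2 * t) / k) := by
    rw [← Real.exp_add]; congr 1; ring
  simp only [this]; ring

lemma PP_pow {k : ℝ} (hk : 0 < k) {g : ℝ → ℝ} (h : PP k g) (n : ℕ) :
    PP k (fun t => t ^ n * g t) := by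
  induction n with
  | zero => simpa using h
  | succ n ih => simpa [pow_succ', mul_assoc] using PP_mul hk ih

lemma PP_bdd {k : ℝ} (hk : 0 < k) {g : ℝ → ℝ} (hc : Continuous g) (hb : ∀ t, |g t| ≤ 1) :
    PP k g := by
  intro a ha
  have h1 : IntegrableOn (fun t => Real.exp (-(a * t) / k)) (Set.Ioi 0) := by
    have := integrableOn_exp_mul_Ioi (a := -(a/k)) (by simp; positivity) 0
    refine this.congr (Filter.Eventually.of_forall fun t => ?_)
    simp only; congr 1; ring
  exact Integrable.bdd_mul (c := 1) h1 hc.aestronglyMeasurable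
    (Filter.Eventually.of_forall fun t => hb t)

lemma LL_hasDerivAt {k : ℝ} (hk : 0 < k) {g : ℝ → ℝ} (h : PP k g) {x : ℝ} (hx : 0 < x) :
    HasDerivAt (LL k g) (LL k (fun t => (-1/k) * (t * g t)) x) x := by
  have hP := PP_const_mul (-1/k) (PP_mul hk h)
  have hs : Metric.ball x (x/2) ∈ nhds x := Metric.ball_mem_nhds _ (by positivity)
  have hpos : ∀ y ∈ Metric.ball x (x/2), x/2 < y := by
    intro y hy
    rw [Metric.mem_ball, Real.dist_eq, abs_lt] at hy
    linarith
  refine (hasDerivAt_integral_of_dominated_loc_of_deriv_le (μ := volume.restrict (Set.Ioi 0))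
    (F := fun y t => g t * Real.exp (-(y * t) / k))
    (F' := fun y t => (-1/k) * (t * g t) * Real.exp (-(y * t) / k))
    (bound := fun t => ‖(-1/k) * (t * g t) * Real.exp (-(x/2 * t) / k)‖)
    hs ?_ (h x hx) (hP x hx).aestronglyMeasurable ?_ (hP (x/2) (by positivity)).norm ?_).2
  · filter_upwards [hs] with y hy
    exact (h y (by linarith [hpos y hy])).aestronglyMeasurable
  · refine (ae_restrict_iff' measurableSet_Ioi).2 (Filter.Eventually.of_forall fun t ht y hy => ?_)
    have ht : 0 < t := ht
    rw [norm_mul, norm_mul _ (Real.exp _)]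
    refine mul_le_mul_of_nonneg_left ?_ (norm_nonneg _)
    rw [Real.norm_of_nonneg (Real.exp_pos _).le, Real.norm_of_nonneg (Real.exp_pos _).le]
    apply Real.exp_le_exp.2
    have := hpos y hy
    gcongr
  · refine Filter.Eventually.of_forall fun t y hy => ?_
    have h1 : HasDerivAt (fun y : ℝ => -(y * t) / k) (-(1 * t) / k) y :=
      (((hasDerivAt_id y).mul_const t).neg).div_const k
    refine (h1.exp.const_mul (g t)).congr_deriv ?_
    ring

lemma LL_iter {k : ℝ} (hk : 0 < k) {g : ℝ → ℝ} (h : PP k g) (m : ℕ) :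
    ∀ x : ℝ, 0 < x → iteratedDeriv m (LL k g) x = LL k (fun t => (-1/k)^m * (t^m * g t)) x := by
  induction m with
  | zero => intro x hx; simp
  | succ m ih =>
    intro x hx
    rw [iteratedDeriv_succ]
    have he : iteratedDeriv m (LL k g) =ᶠ[nhds x] LL k (fun t => (-1/k)^m * (t^m * g t)) := by
      filter_upwards [lt_mem_nhds hx] with y hy using ih y hy
    rw [he.deriv_eq, (LL_hasDerivAt hk (PP_const_mul _ (PP_pow hk h m)) hx).deriv]
    congr 1
    ext t
    ring

lemma LL_const_mul (k c : ℝ) (g : ℝ → ℝ) (x : ℝ) :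
    LL k (fun t => c * g t) x = c * LL k g x := by
  simp only [LL, mul_assoc]
  exact integral_const_mul _ _

noncomputable def ph (t : ℝ) : ℝ := (1 + Real.exp (-t))⁻¹
noncomputable def phd (t : ℝ) : ℝ := Real.exp (-t) / (1 + Real.exp (-t))^2

lemma ph_pos (t : ℝ) : 0 < ph t := by unfold ph; positivity
lemma phd_pos (t : ℝ) : 0 < phd t := by unfold phd; positivity
lemma ph_abs (t : ℝ) : |ph t| ≤ 1 := by
  rw [abs_of_pos (ph_pos t)]
  exact inv_le_one_of_one_le₀ (by linarith [Real.exp_pos (-t)])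
lemma phd_abs (t : ℝ) : |phd t| ≤ 1 := by
  rw [abs_of_pos (phd_pos t)]
  unfold phd
  rw [div_le_one (by positivity)]
  nlinarith [Real.exp_pos (-t)]
lemma ph_cont : Continuous ph := by
  unfold ph
  exact Continuous.inv₀ (by fun_prop) (fun t => by positivity)
lemma phd_cont : Continuous phd := by
  unfold phd
  exact Continuous.div (by fun_prop) (by fun_prop) (fun t => by positivity)
lemma ph_deriv (t : ℝ) : HasDerivAt ph (phd t) t := by
  have h1 : HasDerivAt (fun t : ℝ => 1 + Real.exp (-t)) (Real.exp (-t) * (-1)) t :=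
    ((hasDerivAt_id t).neg.exp).const_add 1
  have := h1.inv (by positivity)
  refine HasDerivAt.congr_deriv this ?_
  unfold phd; ring


noncomputable def hh (n : ℕ) (t : ℝ) : ℝ := ((n:ℝ) + 1) * (t ^ n * ph t) + t ^ (n+1) * phd t

lemma hh_PP {k : ℝ} (hk : 0 < k) (n : ℕ) : PP k (hh n) :=
  PP_add (PP_const_mul _ (PP_pow hk (PP_bdd hk ph_cont ph_abs) n))
    (PP_pow hk (PP_bdd hk phd_cont phd_abs) (n+1))

lemma hh_pos (n : ℕ) {t : ℝ} (ht : 0 < t) : 0 < hh n t := by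
  have := ph_pos t
  have := phd_pos t
  unfold hh; positivity

lemma parts {k : ℝ} (hk : 0 < k) (n : ℕ) {x : ℝ} (hx : 0 < x) :
    x * LL k (fun t => t ^ (n+1) * ph t) x = k * LL k (hh n) x := by
  have hP := PP_pow hk (PP_bdd hk ph_cont ph_abs) (n+1)
  have hd : ∀ t : ℝ, HasDerivAt (fun t => t ^ (n+1) * ph t * Real.exp (-(x * t) / k))
      (hh n t * Real.exp (-(x * t) / k)
        + (-(x/k)) * (t ^ (n+1) * ph t * Real.exp (-(x * t) / k))) t := by
    intro t
    have h1 : HasDerivAt (fun t : ℝ => -(x * t) / k) (-(x * 1) / k) t :=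
      (((hasDerivAt_id t).const_mul x).neg).div_const k
    refine (((hasDerivAt_pow (n+1) t).mul (ph_deriv t)).mul h1.exp).congr_deriv ?_
    simp only [hh, Pi.mul_apply]; push_cast; ring
  have hi1 := hh_PP hk n x hx
  have hi2 := (hP x hx).const_mul (-(x/k))
  have hlim : Filter.Tendsto (fun t => t ^ (n+1) * ph t * Real.exp (-(x * t) / k))
      Filter.atTop (nhds 0) := by
    have h1 : Filter.Tendsto (fun t => t ^ (n+1) * Real.exp (-(x/k) * t))
        Filter.atTop (nhds 0) := by
      have := tendsto_rpow_mul_exp_neg_mul_atTop_nhds_zero ((n+1 : ℕ) : ℝ) (x/k) (by positivity)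
      simpa only [Real.rpow_natCast] using this
    refine squeeze_zero_norm' ?_ h1
    filter_upwards [Filter.eventually_gt_atTop 0] with t ht
    have e : -(x * t) / k = -(x/k) * t := by ring
    rw [e, norm_mul, norm_mul, Real.norm_of_nonneg (Real.exp_pos _).le,
      Real.norm_of_nonneg (pow_pos ht _).le]
    have := ph_abs t
    rw [← Real.norm_eq_abs] at this
    have h3 : 0 < t ^ (n+1) := by positivity
    have h4 : t ^ (n+1) * ‖ph t‖ ≤ t^(n+1) := by nlinarith
    exact mul_le_mul_of_nonneg_right h4 (Real.exp_pos _).le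
  have key := integral_Ioi_of_hasDerivAt_of_tendsto' (a := 0) (fun t _ => hd t)
    (hi1.add hi2) hlim
  have e2 := integral_add hi1 hi2
  rw [integral_const_mul] at e2
  have key2 := e2.symm.trans key
  change LL k (hh n) x + -(x/k) * LL k (fun t => t ^ (n+1) * ph t) x = _ at key2
  simp at key2
  field_simp at key2
  linarith

theorem pkBeta_H_strictly_completely_monotonic (p k : ℝ) (hp : 0 < p) (hk : 0 < k)
    (n : ℕ) (hn : 1 ≤ n) (m : ℕ) (hm : 1 ≤ m) (x : ℝ) (hx : 0 < x) :
    0 < (-1 : ℝ) ^ m *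
      iteratedDeriv m (fun y : ℝ => y * ((-1 : ℝ) ^ n * iteratedDeriv n (pkBeta p k) y)) x := by
  obtain ⟨n, rfl⟩ : ∃ j, n = j + 1 := ⟨n - 1, by omega⟩
  have hb : pkBeta p k = LL k (fun t => (p/k) * ph t) := by
    ext y
    rw [LL_const_mul]
    simp only [pkBeta, LL, ph]
    congr 2
    ext t
    rw [div_eq_mul_inv, mul_comm]
  have hphi := PP_bdd hk ph_cont ph_abs
  have he : (fun y : ℝ => y * ((-1 : ℝ) ^ (n+1) * iteratedDeriv (n+1) (pkBeta p k) y))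
      =ᶠ[nhds x] LL k (fun t => (p / k^(n+1)) * hh n t) := by
    filter_upwards [lt_mem_nhds hx] with y hy
    rw [hb, LL_iter hk (PP_const_mul _ hphi) _ y hy, LL_const_mul, LL_const_mul]
    have : (fun t => t ^ (n+1) * (p/k * ph t)) = fun t => p/k * (t^(n+1) * ph t) := by
      ext t; ring
    rw [this, LL_const_mul]
    have h1 := parts hk n hy
    have h2 : (-1:ℝ)^(n+1) * (-1/k)^(n+1) = 1 / k^(n+1) := by
      rw [← mul_pow, ← one_div_pow]; congr 1; ring
    calc _ = ((-1:ℝ)^(n+1) * (-1/k)^(n+1)) * (p/k)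
            * (y * LL k (fun t => t ^ (n+1) * ph t) y) := by ring
      _ = _ := by rw [h1, h2]; field_simp
  rw [he.iteratedDeriv_eq, LL_iter hk (PP_const_mul _ (hh_PP hk n)) m x hx, LL_const_mul,
    ← mul_assoc, ← mul_pow]
  have e : (-1:ℝ) * (-1/k) = 1/k := by ring
  rw [e]
  refine mul_pos (by positivity) ?_
  have hint := PP_pow hk (PP_const_mul (p / k^(n+1)) (hh_PP hk n)) m x hx
  have hpos : ∀ t ∈ Set.Ioi (0:ℝ),
      0 < t ^ m * (p / k^(n+1) * hh n t) * Real.exp (-(x * t) / k) := by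
    intro t ht
    have ht : 0 < t := ht
    have := hh_pos n ht
    positivity
  unfold LL
  rw [setIntegral_pos_iff_support_of_nonneg_ae _ hint]
  · have : Set.Ioi (0:ℝ) ⊆ (Function.support fun t =>
      t ^ m * (p / k^(n+1) * hh n t) * Real.exp (-(x * t) / k)) ∩ Set.Ioi 0 :=
      fun t ht => ⟨(hpos t ht).ne', ht⟩
    exact lt_of_lt_of_le (by simp) (measure_mono this)
  · exact (ae_restrict_iff' measurableSet_Ioi).2
      (Filter.Eventually.of_forall fun t ht => (hpos t ht).le)
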